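/- arXiv:2405.19071 — 4 statements merged into one kernel-verified Lean document; each statement's English description precedes it below -/
import Mathlib

section
/- For online bin stretching with m = 2 bins, every behavioral randomized online algorithm A satisfies sup over all instances I of E(I,A) ≥ 7/6; in other words, no randomized online algorithm has stretching factor (worst-case expected load of the fullest bin) strictly less than 7/6. -/
open scoped BigOperators

namespace BinStretch

def Fits (m : ℕ) (I : List ℝ) : Prop :=
  ∃ σ : Fin I.length → Fin m,
    ∀ b : Fin m, ∑ i ∈ Finset.univ.filter fun i => σ i = b, I.get i ≤ 1

def IsInstance (m : ℕ) (I : List ℝ) : Prop :=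
  (∀ a ∈ I, 0 < a ∧ a ≤ 1) ∧ Fits m I

noncomputable def payoff (m : ℕ) (I : List ℝ) (D : Fin I.length → Fin m) : ℝ :=
  ⨆ b : Fin m, ∑ i ∈ Finset.univ.filter fun i => D i = b, I.get i

noncomputable def prob {m : ℕ} (A : List ℝ → PMF (Fin m)) (I : List ℝ)
    (D : Fin I.length → Fin m) : ℝ :=
  ∏ i : Fin I.length, ((A (I.take (i.1 + 1))) (D i)).toReal

noncomputable def expPayoff (m : ℕ) (A : List ℝ → PMF (Fin m)) (I : List ℝ) : ℝ :=
  ∑ D : Fin I.length → Fin m, prob A I D * payoff m I D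

def detRun {m : ℕ} (A : List ℝ → Fin m) (I : List ℝ) : Fin I.length → Fin m :=
  fun i => A (I.take (i.1 + 1))

end BinStretch

/-!
The instances `1/3, 1/3, 2/3, 2/3` and `1/3, 1/3, 1` begin with the same two items, so the
algorithm decides about these two items in the same random way on both. Putting them into one bin
costs at least `4/3` on the first instance and `1` on the second; separating them costs at least `1`
on the first and `4/3` on the second. Either way the two payoffs add up to at least `7/3`, hence so
do the expected payoffs, and one of them is at least `7/6`.

A supremum in `ℝ` is only meaningful for a bounded family: the total size of an instance, which is
at most the number of bins, bounds every payoff.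
-/

section ProductWeights

variable {ι ι' κ R : Type*} [Fintype ι] [Fintype ι'] [DecidableEq ι'] [Fintype κ]
  [CommSemiring R]

theorem sum_filter_comp_eq_prod [DecidableEq κ] {f : ι → ι'} (hf : Function.Injective f)
    {p : ι' → κ → R} (hp : ∀ j ∉ Set.range f, ∑ x, p j x = 1) (q : ι → κ) :
    ∑ D : ι' → κ with D ∘ f = q, ∏ j, p j (D j) = ∏ i, p (f i) (q i) := by
  let allowed (j : ι') : Finset κ := {x | ∀ i, f i = j → x = q i}
  have hallowed : ({D | D ∘ f = q} : Finset (ι' → κ)) = Fintype.piFinset allowed := by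
    ext D
    simp only [allowed, Finset.mem_filter_univ, Fintype.mem_piFinset, funext_iff,
      Function.comp_apply]
    exact ⟨fun h j i hij => hij ▸ h i, fun h i => h _ i rfl⟩
  rw [hallowed, ← Finset.prod_univ_sum]
  symm
  refine Fintype.prod_of_injective f hf _ _ (fun j hj => ?_) fun i => ?_
  · have : allowed j = Finset.univ :=
      Finset.filter_true_of_mem fun x _ i hij => (hj ⟨i, hij⟩).elim
    rw [this, hp j hj]
  · have : allowed (f i) = {q i} := by
      ext x
      simp only [allowed, Finset.mem_filter_univ, Finset.mem_singleton, hf.eq_iff, forall_eq]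
    rw [this, Finset.sum_singleton]

theorem sum_prod_mul_comp [DecidableEq ι] {f : ι → ι'} (hf : Function.Injective f) {p : ι' → κ → R}
    (hp : ∀ j ∉ Set.range f, ∑ x, p j x = 1) (g : (ι → κ) → R) :
    ∑ D : ι' → κ, (∏ j, p j (D j)) * g (D ∘ f) =
      ∑ q : ι → κ, (∏ i, p (f i) (q i)) * g q := by
  classical
  rw [← Finset.sum_fiberwise Finset.univ fun D : ι' → κ => D ∘ f]
  refine Finset.sum_congr rfl fun q _ => ?_
  rw [← sum_filter_comp_eq_prod hf hp q, Finset.sum_mul]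
  exact Finset.sum_congr rfl fun D hD => by rw [(Finset.mem_filter.mp hD).2]

end ProductWeights

theorem sum_toReal_pmf {α : Type*} [Fintype α] (q : PMF α) : ∑ a, (q a).toReal = 1 := by
  rw [← ENNReal.toReal_sum fun a _ => q.apply_ne_top a, ← tsum_fintype (L := .unconditional _),
    q.tsum_coe, ENNReal.toReal_one]

namespace BinStretch

variable {m : ℕ} {A : List ℝ → PMF (Fin m)} {I J : List ℝ}

section Expectation

/-- The expected value of a quantity `g` that depends on the decisions of the algorithm `A` on the
items of `I`; in particular `expPayoff m A I` unfolds to `expect A I (payoff m I)`. -/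
noncomputable def expect (A : List ℝ → PMF (Fin m)) (I : List ℝ)
    (g : (Fin I.length → Fin m) → ℝ) : ℝ :=
  ∑ D, prob A I D * g D

theorem prob_nonneg (A : List ℝ → PMF (Fin m)) (I : List ℝ) (D : Fin I.length → Fin m) :
    0 ≤ prob A I D :=
  Finset.prod_nonneg fun _ _ => ENNReal.toReal_nonneg

theorem sum_prob (A : List ℝ → PMF (Fin m)) (I : List ℝ) : ∑ D, prob A I D = 1 := by
  simp only [prob, ← Fintype.prod_sum fun (i : Fin I.length) b =>
    (A (I.take (i.1 + 1)) b).toReal, sum_toReal_pmf, Finset.prod_const_one]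

theorem expect_mono {g h : (Fin I.length → Fin m) → ℝ} (hgh : ∀ D, g D ≤ h D) :
    expect A I g ≤ expect A I h :=
  Finset.sum_le_sum fun D _ => mul_le_mul_of_nonneg_left (hgh D) (prob_nonneg A I D)

theorem expect_add (g h : (Fin I.length → Fin m) → ℝ) :
    expect A I (fun D => g D + h D) = expect A I g + expect A I h := by
  simp only [expect, mul_add, Finset.sum_add_distrib]

theorem expect_const (A : List ℝ → PMF (Fin m)) (I : List ℝ) (c : ℝ) :
    expect A I (fun _ => c) = c := by
  rw [expect, ← Finset.sum_mul, sum_prob, one_mul]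

/-- The decisions on the items of a prefix `I` of `J` that are part of a decision sequence on `J`;
an online algorithm makes them before it sees the rest of `J`. -/
def restrict (h : I <+: J) (D : Fin J.length → Fin m) : Fin I.length → Fin m :=
  D ∘ Fin.castLE h.length_le

theorem expect_restrict (h : I <+: J) (g : (Fin I.length → Fin m) → ℝ) :
    expect A J (fun D => g (restrict h D)) = expect A I g := by
  have htake (i : Fin I.length) : J.take (i.1 + 1) = I.take (i.1 + 1) := by
    obtain ⟨K, rfl⟩ := h
    exact List.take_append_of_le_length i.2
  simp only [expect, prob, restrict]
  rw [sum_prod_mul_comp (Fin.castLE_injective h.length_le)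
    (p := fun j b => (A (J.take (j.1 + 1)) b).toReal) fun _ _ => sum_toReal_pmf _]
  simp only [Fin.val_castLE, htake]

theorem le_expPayoff_add_expPayoff {P : List ℝ} (hI : P <+: I) (hJ : P <+: J)
    {g h : (Fin P.length → Fin m) → ℝ} (hg : ∀ D, g (restrict hI D) ≤ payoff m I D)
    (hh : ∀ D, h (restrict hJ D) ≤ payoff m J D) {c : ℝ} (hc : ∀ D, c ≤ g D + h D) :
    c ≤ expPayoff m A I + expPayoff m A J :=
  calc
    c = expect A P (fun _ => c) := (expect_const A P c).symm
    _ ≤ expect A P (fun D => g D + h D) := expect_mono hc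
    _ = expect A P g + expect A P h := expect_add g h
    _ = expect A I (fun D => g (restrict hI D)) + expect A J (fun D => h (restrict hJ D)) := by
      rw [expect_restrict, expect_restrict]
    _ ≤ expPayoff m A I + expPayoff m A J := add_le_add (expect_mono hg) (expect_mono hh)

end Expectation

section Payoff

theorem payoff_le_sum (hI : ∀ a ∈ I, 0 ≤ a) (D : Fin I.length → Fin m) :
    payoff m I D ≤ ∑ i, I.get i := by
  have hget (i : Fin I.length) : 0 ≤ I.get i := hI _ (I.get_mem i)
  exact Real.iSup_le (fun b => Finset.sum_le_univ_sum_of_nonneg hget)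
    (Finset.sum_nonneg fun i _ => hget i)

theorem sum_le_payoff (hI : ∀ a ∈ I, 0 ≤ a) (D : Fin I.length → Fin m) {b : Fin m}
    (S : Finset (Fin I.length)) (hS : ∀ i ∈ S, D i = b) : ∑ i ∈ S, I.get i ≤ payoff m I D :=
  calc
    ∑ i ∈ S, I.get i ≤ ∑ i with D i = b, I.get i :=
      Finset.sum_le_sum_of_subset_of_nonneg (fun i hi => (Finset.mem_filter_univ i).mpr (hS i hi))
        fun i _ _ => hI _ (I.get_mem i)
    _ ≤ payoff m I D :=
      le_ciSup (f := fun b => ∑ i with D i = b, I.get i) (Set.finite_range _).bddAbove b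

theorem get_le_payoff (hI : ∀ a ∈ I, 0 ≤ a) (D : Fin I.length → Fin m) (i : Fin I.length) :
    I.get i ≤ payoff m I D := by
  simpa only [Finset.sum_singleton] using
    sum_le_payoff hI D (b := D i) {i} fun _ hj => congrArg D (Finset.mem_singleton.mp hj)

theorem add_le_payoff (hI : ∀ a ∈ I, 0 ≤ a) (D : Fin I.length → Fin m) {i j : Fin I.length}
    (hij : i ≠ j) (h : D i = D j) : I.get i + I.get j ≤ payoff m I D := by
  rw [← Finset.sum_pair hij]
  exact sum_le_payoff hI D (b := D j) {i, j} (by simp [h])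

theorem add_add_le_payoff (hI : ∀ a ∈ I, 0 ≤ a) (D : Fin I.length → Fin m)
    {i j k : Fin I.length} (hij : i ≠ j) (hik : i ≠ k) (hjk : j ≠ k) (h : D i = D j)
    (h' : D j = D k) : I.get i + I.get j + I.get k ≤ payoff m I D := by
  rw [add_assoc, ← Finset.sum_pair hjk, ← Finset.sum_insert (by simp [hij, hik])]
  exact sum_le_payoff hI D (b := D k) {i, j, k} (by simp [h, h'])

theorem Fits.sum_le (hI : Fits m I) : ∑ i, I.get i ≤ m := by
  obtain ⟨σ, hσ⟩ := hI
  calc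
    ∑ i, I.get i = ∑ b, ∑ i with σ i = b, I.get i := (Finset.sum_fiberwise _ _ _).symm
    _ ≤ ∑ _b : Fin m, (1 : ℝ) := Finset.sum_le_sum fun b _ => hσ b
    _ = m := by rw [Finset.sum_const, Finset.card_fin, nsmul_one]

theorem IsInstance.nonneg (hI : IsInstance m I) : ∀ a ∈ I, 0 ≤ a :=
  fun a ha => (hI.1 a ha).1.le

theorem IsInstance.expPayoff_le (hI : IsInstance m I) (A : List ℝ → PMF (Fin m)) :
    expPayoff m A I ≤ m :=
  calc
    expPayoff m A I ≤ expect A I (fun _ => (m : ℝ)) :=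
      expect_mono fun D => (payoff_le_sum hI.nonneg D).trans hI.2.sum_le
    _ = m := expect_const A I m

theorem bddAbove_range_expPayoff (A : List ℝ → PMF (Fin m)) :
    BddAbove (Set.range fun I : {I : List ℝ // IsInstance m I} => expPayoff m A I.1) :=
  ⟨m, Set.forall_mem_range.mpr fun I => I.2.expPayoff_le A⟩

end Payoff

section HardInstances

theorem isInstance_third_third_twoThirds_twoThirds : IsInstance 2 [1/3, 1/3, 2/3, 2/3] := by
  let σ : Fin 4 → Fin 2 := ![0, 1, 0, 1]
  have hσ (b : Fin 2) : ∑ i : Fin 4 with σ i = b, [(1/3 : ℝ), 1/3, 2/3, 2/3].get i ≤ 1 := by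
    revert b
    norm_num [σ, Fin.forall_fin_two, Finset.sum_filter, Fin.sum_univ_succ]
  exact ⟨by norm_num, σ, hσ⟩

theorem isInstance_third_third_one : IsInstance 2 [1/3, 1/3, 1] := by
  let σ : Fin 3 → Fin 2 := ![0, 0, 1]
  have hσ (b : Fin 2) : ∑ i : Fin 3 with σ i = b, [(1/3 : ℝ), 1/3, 1].get i ≤ 1 := by
    revert b
    norm_num [σ, Fin.forall_fin_two, Finset.sum_filter, Fin.sum_univ_succ]
  exact ⟨by norm_num, σ, hσ⟩

theorem ite_le_payoff_third_third_twoThirds_twoThirds (D : Fin 4 → Fin 2) :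
    (if D 0 = D 1 then 4/3 else 1) ≤ payoff 2 [1/3, 1/3, 2/3, 2/3] D := by
  have hnonneg := isInstance_third_third_twoThirds_twoThirds.nonneg
  have hpair {i j : Fin 4} (hij : i ≠ j) (h : D i = D j) := add_le_payoff hnonneg D hij h
  have htriple {i j k : Fin 4} (hij : i ≠ j) (hik : i ≠ k) (hjk : j ≠ k) (h : D i = D j)
      (h' : D j = D k) := add_add_le_payoff hnonneg D hij hik hjk h h'
  split_ifs with h01
  · obtain h23 | h12 | h13 : D 2 = D 3 ∨ D 1 = D 2 ∨ D 1 = D 3 := by omega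
    · have : (2/3 + 2/3 : ℝ) ≤ _ := hpair (by decide) h23
      linarith
    · have : (1/3 + 1/3 + 2/3 : ℝ) ≤ _ :=
        htriple (by decide) (by decide) (by decide) h01 h12
      linarith
    · have : (1/3 + 1/3 + 2/3 : ℝ) ≤ _ :=
        htriple (by decide) (by decide) (by decide) h01 h13
      linarith
  · obtain h02 | h12 : D 0 = D 2 ∨ D 1 = D 2 := by omega
    · have : (1/3 + 2/3 : ℝ) ≤ _ := hpair (by decide) h02
      linarith
    · have : (1/3 + 2/3 : ℝ) ≤ _ := hpair (by decide) h12
      linarith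

theorem ite_le_payoff_third_third_one (D : Fin 3 → Fin 2) :
    (if D 0 = D 1 then 1 else 4/3) ≤ payoff 2 [1/3, 1/3, 1] D := by
  have hnonneg := isInstance_third_third_one.nonneg
  have hpair {i j : Fin 3} (hij : i ≠ j) (h : D i = D j) := add_le_payoff hnonneg D hij h
  split_ifs with h01
  · exact get_le_payoff hnonneg D (2 : Fin 3)
  · obtain h02 | h12 : D 0 = D 2 ∨ D 1 = D 2 := by omega
    · have : (1/3 + 1 : ℝ) ≤ _ := hpair (by decide) h02
      linarith
    · have : (1/3 + 1 : ℝ) ≤ _ := hpair (by decide) h12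
      linarith

theorem seven_thirds_le_expPayoff_add_expPayoff (A : List ℝ → PMF (Fin 2)) :
    7/3 ≤ expPayoff 2 A [1/3, 1/3, 2/3, 2/3] + expPayoff 2 A [1/3, 1/3, 1] :=
  le_expPayoff_add_expPayoff (P := [1/3, 1/3]) (I := [1/3, 1/3, 2/3, 2/3]) (J := [1/3, 1/3, 1])
    ⟨[2/3, 2/3], rfl⟩ ⟨[1], rfl⟩
    (g := fun D : Fin 2 → Fin 2 => if D 0 = D 1 then 4/3 else 1)
    (h := fun D : Fin 2 → Fin 2 => if D 0 = D 1 then 1 else 4/3)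
    ite_le_payoff_third_third_twoThirds_twoThirds ite_le_payoff_third_third_one
    fun D => by split_ifs <;> norm_num

end HardInstances

end BinStretch

theorem randomized_lower_bound_two_bins (A : List ℝ → PMF (Fin 2)) :
    (7 : ℝ) / 6 ≤ ⨆ I : {I : List ℝ // BinStretch.IsInstance 2 I},
      BinStretch.expPayoff 2 A I.1 := by
  have hfour := le_ciSup (BinStretch.bddAbove_range_expPayoff A)
    ⟨_, BinStretch.isInstance_third_third_twoThirds_twoThirds⟩
  have hthree := le_ciSup (BinStretch.bddAbove_range_expPayoff A)
    ⟨_, BinStretch.isInstance_third_third_one⟩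
  have hsum := BinStretch.seven_thirds_le_expPayoff_add_expPayoff A
  linarith only [hfour, hthree, hsum]
end

section
/- For online bin stretching with m = 2 bins, for every deterministic online algorithm A there exists an instance I all of whose item sizes lie in {1/3, 2/3, 1} such that f(I, A(I)) ≥ 4/3; hence no deterministic online algorithm has stretching factor strictly less than 4/3. -/
/-!
For `m ≥ 2` bins, the adversary starts with `m` items of size `1/3`. If the algorithm spreads them
over all the bins, an item of size `1` raises the bin that receives it to `4/3`. Otherwise, by the
pigeonhole principle, some bin holds two of them, and the adversary sends `m` items of size `2/3`:
either each bin receives one of these, in particular the bin with two small items, or some bin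
receives two of them. In each case a bin reaches `4/3`, although both item lists fit into `m` unit
bins.
-/

open scoped BigOperators

namespace BinStretch

open List (replicate)

open Finset Function

/-- The load of bin `b` when the items of `I` are placed according to `D`: `Fits` asks for loads at
most `1`, and `payoff` is the largest load. -/
noncomputable def load {m : ℕ} (I : List ℝ) (D : Fin I.length → Fin m) (b : Fin m) : ℝ :=
  ∑ i with D i = b, I.get i

theorem exists_one_lt_card_fiber_of_not_injective {α β : Type*} [Fintype α] [DecidableEq β]
    {f : α → β} (hf : ¬ Injective f) : ∃ b, 1 < #{a | f a = b} := by
  obtain ⟨i, j, hij, hne⟩ := not_injective_iff.mp hf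
  exact ⟨f j, one_lt_card.mpr ⟨i, by simpa using hij, j, by simp, hne⟩⟩

section

variable {m n k : ℕ} {x y : ℝ}

theorem load_le_payoff (I : List ℝ) (D : Fin I.length → Fin m) (b : Fin m) :
    load I D b ≤ payoff m I D :=
  le_ciSup (f := load I D) (Set.finite_range _).bddAbove b

theorem load_replicate_append_replicate
    (D : Fin (replicate n x ++ replicate k y).length → Fin m) (b : Fin m) :
    load (replicate n x ++ replicate k y) D b =
      #{i : Fin n | D (Fin.cast (by simp) (Fin.castAdd k i)) = b} * x +
        #{j : Fin k | D (Fin.cast (by simp) (Fin.natAdd n j)) = b} * y := by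
  have hlen : n + k = (replicate n x ++ replicate k y).length := by simp
  rw [load, sum_filter, ← (finCongr hlen).sum_comp, Fin.sum_univ_add]
  simp [← sum_filter]

theorem fits_replicate_append_replicate (σ : Fin n → Fin m) (τ : Fin k → Fin m)
    (h : ∀ b, #{i | σ i = b} * x + #{j | τ j = b} * y ≤ 1) :
    Fits m (replicate n x ++ replicate k y) := by
  refine ⟨Fin.append σ τ ∘ Fin.cast (by simp), fun b ↦ ?_⟩
  refine (load_replicate_append_replicate _ b).trans_le ?_
  simpa using h b

theorem isInstance_replicate_append_replicate (hx : 0 < x) (hy : 0 < y) (hxy : x + y ≤ 1) :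
    IsInstance m (replicate m x ++ replicate m y) := by
  refine ⟨fun a ha ↦ ?_, fits_replicate_append_replicate id id fun b ↦ ?_⟩
  · rcases List.mem_append.mp ha with ha | ha <;> obtain rfl := List.eq_of_mem_replicate ha <;>
      constructor <;> linarith
  · simpa [filter_eq'] using hxy

theorem isInstance_replicate_append_one (hm : 2 ≤ m) (hx : 0 < x) (hx' : x ≤ 1 / 2) :
    IsInstance m (replicate m x ++ [1]) := by
  obtain ⟨n, rfl⟩ := Nat.exists_eq_add_of_le' hm
  refine ⟨fun a ha ↦ ?_, ?_⟩
  · rcases List.mem_append.mp ha with ha | ha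
    · obtain rfl := List.eq_of_mem_replicate ha
      constructor <;> linarith
    · obtain rfl := List.mem_singleton.mp ha
      norm_num
  -- The item of size `1` gets bin `0` for itself, and the small item `0` moves over to bin `1`.
  let σ : Fin (n + 2) → Fin (n + 2) := fun i ↦ if i = 0 then 1 else i
  refine fits_replicate_append_replicate (k := 1) σ (fun _ ↦ 0) fun b ↦ ?_
  rcases eq_or_ne b 0 with rfl | hb
  · have hσ (i : Fin (n + 2)) : σ i ≠ 0 := by grind [one_ne_zero]
    simp [hσ]
  · have hsub : ({i | σ i = b} : Finset (Fin (n + 2))) ⊆ {0, b} := by grind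
    have hcard : (#{i | σ i = b} : ℝ) ≤ 2 := mod_cast (card_le_card hsub).trans card_le_two
    calc (#{i | σ i = b} : ℝ) * x + #{_j : Fin 1 | (0 : Fin (n + 2)) = b} * 1
        = #{i | σ i = b} * x := by simp [hb.symm]
      _ ≤ 2 * x := by gcongr
      _ ≤ 1 := by linarith

theorem load_detRun_replicate_append_replicate (A : List ℝ → Fin m) (b : Fin m) :
    load (replicate n x ++ replicate k y) (detRun A _) b =
      #{i : Fin n | A (replicate (i + 1) x) = b} * x +
        #{j : Fin k | A (replicate n x ++ replicate (j + 1) y) = b} * y := by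
  have hfirst (i : Fin n) :
      (replicate n x ++ replicate k y).take (i + 1) = replicate (i + 1) x := by
    rw [List.take_append_of_le_length (by simp)]
    simp
  have hsecond (j : Fin k) : (replicate n x ++ replicate k y).take (n + j + 1) =
      replicate n x ++ replicate (j + 1) y := by
    simp [List.take_append, add_assoc]
  simp [load_replicate_append_replicate, detRun, hfirst, hsecond]

theorem mul_add_mul_le_payoff_detRun (A : List ℝ → Fin m) (b : Fin m) (hx : 0 ≤ x) (hy : 0 ≤ y)
    {p q : ℕ} (hp : p ≤ #{i : Fin n | A (replicate (i + 1) x) = b})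
    (hq : q ≤ #{j : Fin k | A (replicate n x ++ replicate (j + 1) y) = b}) :
    p * x + q * y ≤ payoff m (replicate n x ++ replicate k y) (detRun A _) := by
  refine le_trans ?_ (load_le_payoff _ _ b)
  rw [load_detRun_replicate_append_replicate]
  gcongr

theorem add_le_payoff_detRun_of_surjective (A : List ℝ → Fin m) (hx : 0 ≤ x) (hy : 0 ≤ y)
    (h : Surjective fun i : Fin n ↦ A (replicate (i + 1) x)) :
    x + y ≤ payoff m (replicate n x ++ [y]) (detRun A _) := by
  obtain ⟨i, hi⟩ := h (A (replicate n x ++ [y]))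
  have hfirst : 0 < #{i : Fin n | A (replicate (i + 1) x) = A (replicate n x ++ [y])} :=
    card_pos.mpr ⟨i, by simpa using hi⟩
  simpa using mul_add_mul_le_payoff_detRun (k := 1) A _ hx hy (p := 1) (q := 1) hfirst (by simp)

theorem min_le_payoff_detRun_of_not_injective (A : List ℝ → Fin m) (hx : 0 ≤ x) (hy : 0 ≤ y)
    (h : ¬ Injective fun i : Fin n ↦ A (replicate (i + 1) x)) :
    min (2 * x + y) (2 * y) ≤ payoff m (replicate n x ++ replicate m y) (detRun A _) := by
  obtain ⟨b, hfirst⟩ := exists_one_lt_card_fiber_of_not_injective h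
  by_cases hinj : Injective fun j : Fin m ↦ A (replicate n x ++ replicate (j + 1) y)
  · obtain ⟨j, hj⟩ := Finite.surjective_of_injective hinj b
    have hsecond : 0 < #{j : Fin m | A (replicate n x ++ replicate (j + 1) y) = b} :=
      card_pos.mpr ⟨j, by simpa using hj⟩
    refine min_le_of_left_le ?_
    simpa using mul_add_mul_le_payoff_detRun A b hx hy hfirst hsecond
  · obtain ⟨c, hsecond⟩ := exists_one_lt_card_fiber_of_not_injective hinj
    refine min_le_of_right_le ?_
    simpa using mul_add_mul_le_payoff_detRun A c hx hy (Nat.zero_le _) hsecond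

end

end BinStretch

theorem deterministic_lower_bound_two_bins_general {m : ℕ} (hm : 2 ≤ m) (A : List ℝ → Fin m) :
    ∃ I : List ℝ, BinStretch.IsInstance m I ∧
      (∀ a ∈ I, a = 1/3 ∨ a = 2/3 ∨ a = 1) ∧
      (4 : ℝ) / 3 ≤ BinStretch.payoff m I (BinStretch.detRun A I) := by
  have hx : (0 : ℝ) < 1 / 3 := by norm_num
  have hy : (0 : ℝ) < 2 / 3 := by norm_num
  by_cases h : Function.Injective fun i : Fin m ↦ A (List.replicate (i + 1) (1 / 3))
  · refine ⟨List.replicate m (1 / 3) ++ [1],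
      BinStretch.isInstance_replicate_append_one hm hx (by norm_num), by grind, ?_⟩
    have hpayoff := BinStretch.add_le_payoff_detRun_of_surjective A hx.le zero_le_one
      (Finite.surjective_of_injective h)
    exact le_trans (by norm_num) hpayoff
  · refine ⟨List.replicate m (1 / 3) ++ List.replicate m (2 / 3),
      BinStretch.isInstance_replicate_append_replicate hx hy (by norm_num), by grind, ?_⟩
    have hpayoff := BinStretch.min_le_payoff_detRun_of_not_injective A hx.le hy.le h
    exact le_trans (by norm_num) hpayoff

theorem deterministic_lower_bound_two_bins (A : List ℝ → Fin 2) :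
    ∃ I : List ℝ, BinStretch.IsInstance 2 I ∧
      (∀ a ∈ I, a = 1/3 ∨ a = 2/3 ∨ a = 1) ∧
      (4 : ℝ) / 3 ≤ BinStretch.payoff 2 I (BinStretch.detRun A I) :=
  deterministic_lower_bound_two_bins_general le_rfl A
end

section
/- Define g : ℝ → ℝ by g(z) = 1/√|z| for z ≠ 0 and g(0) = 0. Then for every y ∈ ℝ, ∫_{x ∈ [0,∞)} e^{−x}·g(x − y) dx ≤ 2√π. In particular, in the guessing game with payoff f(x,y) = 1/√|x−y| for x ≠ y and 0 for x = y, the randomized strategy for the minimizing player that draws x from the exponential distribution with density e^{−x} on [0,∞) has worst-case expected payoff at most 2√π, even though every deterministic strategy has worst-case payoff +∞. -/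
/-!
Let `w, g ≥ 0` decrease on `(0, ∞)` with `g` even, and put `J = ∫₀^∞ w g`; then
`∫₀^∞ w(x) g(x - y) dx ≤ 2 J` for every `y`. For `y ≤ 0` already `g(x - y) ≤ g(x)`. For `y > 0`
split at `y`. On `(y, ∞)` replace `w(x)` by the larger `w(x - y)` and translate. On `(0, y)` the
reflection `x ↦ y - x` pairs `w(x) g(y - x)` with `w(y - x) g(x)`, and since `w` and `g` are
similarly ordered the two-point rearrangement inequality bounds the pair by
`w(x) g(x) + w(y - x) g(y - x)`. Each part contributes at most `J`. For `w(x) = e^{-x}` and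
`g(x) = |x|^{s-1}` with `0 < s ≤ 1` one has `J = Γ(s)`, and `Γ(1/2) = √π`.
-/

open scoped BigOperators

noncomputable def invSqrtAbs : ℝ → ℝ := fun z => if z = 0 then 0 else 1 / Real.sqrt |z|

open MeasureTheory Set Function
open scoped ENNReal

section Rearrangement

-- Mathlib's `mul_add_mul_le_mul_add_mul` needs cancellation of addition, which fails in `ℝ≥0∞`.
lemma mul_add_mul_le_mul_add_mul_of_canonicallyOrdered {R : Type*} [NonUnitalNonAssocSemiring R]
    [Preorder R] [CanonicallyOrderedAdd R] {a b c d : R} (hab : a ≤ b) (hcd : c ≤ d) :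
    a * d + b * c ≤ a * c + b * d := by
  obtain ⟨p, rfl⟩ := exists_add_of_le hab
  obtain ⟨q, rfl⟩ := exists_add_of_le hcd
  calc a * (c + q) + (a + p) * c
      ≤ a * (c + q) + (a + p) * c + p * q := le_self_add
    _ = a * c + (a + p) * (c + q) := by simp only [mul_add, add_mul]; abel

lemma mul_add_mul_le_mul_add_mul_of_monovaryOn {ι R : Type*} [NonUnitalNonAssocSemiring R]
    [LinearOrder R] [CanonicallyOrderedAdd R] {f g : ι → R} {s : Set ι} (hfg : MonovaryOn f g s)
    {i j : ι} (hi : i ∈ s) (hj : j ∈ s) :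
    f i * g j + f j * g i ≤ f i * g i + f j * g j := by
  rcases lt_trichotomy (g i) (g j) with h | h | h
  · exact mul_add_mul_le_mul_add_mul_of_canonicallyOrdered (hfg hi hj h) h.le
  · rw [h]
  · rw [add_comm, add_comm (f i * g i)]
    exact mul_add_mul_le_mul_add_mul_of_canonicallyOrdered (hfg hj hi h) h.le

lemma setLIntegral_mul_comp_le_of_monovaryOn {α : Type*} [MeasurableSpace α] {μ : Measure α}
    {σ : α → α} {s : Set α} {f g : α → ℝ≥0∞} (hσ : MeasurePreserving σ μ μ)
    (hσ_inv : Involutive σ) (hs : MeasurableSet s) (hσ_maps : MapsTo σ s s)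
    (hf : AEMeasurable f (μ.restrict s)) (hg : AEMeasurable g (μ.restrict s))
    (hfg : MonovaryOn f g s) :
    ∫⁻ x in s, f x * g (σ x) ∂μ ≤ ∫⁻ x in s, f x * g x ∂μ := by
  have preimage_eq : σ ⁻¹' s = s :=
    Subset.antisymm (fun x hx => hσ_inv x ▸ hσ_maps hx) hσ_maps
  have hσ_s : MeasurePreserving σ (μ.restrict s) (μ.restrict s) := by
    simpa only [preimage_eq] using hσ.restrict_preimage hs
  have σ_emb : MeasurableEmbedding σ :=
    (MeasurableEquiv.ofInvolutive σ hσ_inv hσ.measurable).measurableEmbedding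
  have hgσ : AEMeasurable (g ∘ σ) (μ.restrict s) :=
    hg.comp_quasiMeasurePreserving hσ_s.quasiMeasurePreserving
  have two_mul_eq (h : α → ℝ≥0∞) (hh : AEMeasurable h (μ.restrict s)) :
      2 * ∫⁻ x in s, h x ∂μ = ∫⁻ x in s, (h x + h (σ x)) ∂μ := by
    rw [lintegral_add_left' hh, hσ_s.lintegral_comp_emb σ_emb, two_mul]
  have two_mul_le : 2 * ∫⁻ x in s, f x * g (σ x) ∂μ ≤ 2 * ∫⁻ x in s, f x * g x ∂μ := by
    rw [two_mul_eq (fun x => f x * g (σ x)) (hf.mul hgσ), two_mul_eq (fun x => f x * g x)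
      (hf.mul hg)]
    refine setLIntegral_mono' hs fun x hx => ?_
    simpa only [hσ_inv x] using mul_add_mul_le_mul_add_mul_of_monovaryOn hfg hx (hσ_maps hx)
  exact (ENNReal.mul_le_mul_iff_right two_ne_zero ENNReal.ofNat_ne_top).1 two_mul_le

end Rearrangement

section HalfLine

variable {w g : ℝ → ℝ≥0∞}

lemma setLIntegral_Ioo_mul_comp_sub_le (hw : AntitoneOn w (Ioi 0)) (hg : AntitoneOn g (Ioi 0))
    (y : ℝ) : ∫⁻ x in Ioo 0 y, w x * g (y - x) ≤ ∫⁻ x in Ioo 0 y, w x * g x := by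
  have hw' : AntitoneOn w (Ioo 0 y) := hw.mono Ioo_subset_Ioi_self
  have hg' : AntitoneOn g (Ioo 0 y) := hg.mono Ioo_subset_Ioi_self
  exact setLIntegral_mul_comp_le_of_monovaryOn (Measure.measurePreserving_sub_left volume y)
    (sub_sub_cancel y) measurableSet_Ioo
    (fun x hx => ⟨sub_pos.2 hx.2, sub_lt_self y hx.1⟩)
    (aemeasurable_restrict_of_antitoneOn measurableSet_Ioo hw')
    (aemeasurable_restrict_of_antitoneOn measurableSet_Ioo hg') (hw'.monovaryOn hg')

lemma setLIntegral_Ioi_comp_sub (f : ℝ → ℝ≥0∞) (y : ℝ) :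
    ∫⁻ x in Ioi y, f (x - y) = ∫⁻ x in Ioi 0, f x := by
  simpa only [preimage_sub_const_Ioi, zero_add] using
    (measurePreserving_sub_right volume y).setLIntegral_comp_preimage_emb
      (measurableEmbedding_subRight y) f (Ioi 0)

lemma setLIntegral_Ioi_mul_comp_sub_le (hw : AntitoneOn w (Ioi 0)) {y : ℝ} (hy : 0 ≤ y) :
    ∫⁻ x in Ioi y, w x * g (x - y) ≤ ∫⁻ x in Ioi 0, w x * g x := by
  rw [← setLIntegral_Ioi_comp_sub (fun x => w x * g x) y]
  refine setLIntegral_mono' measurableSet_Ioi fun x hx => ?_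
  gcongr
  exact hw (mem_Ioi.2 (sub_pos.2 hx)) (hy.trans_lt hx) (sub_le_self x hy)

theorem lintegral_mul_comp_sub_le_two_mul (hw : AntitoneOn w (Ioi 0)) (hg : AntitoneOn g (Ioi 0))
    (g_even : g.Even) (y : ℝ) :
    ∫⁻ x in Ioi 0, w x * g (x - y) ≤ 2 * ∫⁻ x in Ioi 0, w x * g x := by
  rcases le_total y 0 with hy | hy
  · calc ∫⁻ x in Ioi 0, w x * g (x - y)
        ≤ ∫⁻ x in Ioi 0, w x * g x := by
          refine setLIntegral_mono' measurableSet_Ioi fun x (hx : 0 < x) => ?_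
          have x_le : x ≤ x - y := by linarith
          gcongr
          exact hg hx (hx.trans_le x_le) x_le
      _ ≤ 2 * ∫⁻ x in Ioi 0, w x * g x := le_mul_of_one_le_left' one_le_two
  · have left_le : ∫⁻ x in Ioc 0 y, w x * g (x - y) ≤ ∫⁻ x in Ioi 0, w x * g x :=
      calc ∫⁻ x in Ioc 0 y, w x * g (x - y)
          = ∫⁻ x in Ioo 0 y, w x * g (y - x) := by
            simp only [setLIntegral_congr Ioo_ae_eq_Ioc.symm, ← g_even (_ - y), neg_sub]
        _ ≤ ∫⁻ x in Ioo 0 y, w x * g x := setLIntegral_Ioo_mul_comp_sub_le hw hg y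
        _ ≤ ∫⁻ x in Ioi 0, w x * g x := lintegral_mono_set Ioo_subset_Ioi_self
    calc ∫⁻ x in Ioi 0, w x * g (x - y)
        ≤ (∫⁻ x in Ioc 0 y, w x * g (x - y)) + ∫⁻ x in Ioi y, w x * g (x - y) := by
          rw [← Ioc_union_Ioi_eq_Ioi hy]
          exact lintegral_union_le _ _ _
      _ ≤ (∫⁻ x in Ioi 0, w x * g x) + ∫⁻ x in Ioi 0, w x * g x :=
          add_le_add left_le (setLIntegral_Ioi_mul_comp_sub_le hw hy)
      _ = 2 * ∫⁻ x in Ioi 0, w x * g x := (two_mul _).symm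

end HalfLine

section Gamma

open Real

variable {s : ℝ}

lemma lintegral_exp_neg_mul_abs_rpow (hs : 0 < s) :
    ∫⁻ x in Ioi (0 : ℝ), ENNReal.ofReal (exp (-x)) * ENNReal.ofReal (|x| ^ (s - 1)) =
      ENNReal.ofReal (Gamma s) := by
  have integrand_nonneg : 0 ≤ᵐ[volume.restrict (Ioi 0)] fun x : ℝ => exp (-x) * x ^ (s - 1) := by
    filter_upwards [ae_restrict_mem measurableSet_Ioi] with x (hx : 0 < x)
    exact (mul_pos (exp_pos _) (rpow_pos_of_pos hx _)).le
  rw [Gamma_eq_integral hs,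
    ofReal_integral_eq_lintegral_ofReal (GammaIntegral_convergent hs) integrand_nonneg]
  refine setLIntegral_congr_fun measurableSet_Ioi fun x (hx : 0 < x) => ?_
  rw [abs_of_pos hx, ENNReal.ofReal_mul (exp_pos _).le]

lemma antitoneOn_abs_rpow_Ioi {r : ℝ} (hr : r ≤ 0) :
    AntitoneOn (fun x : ℝ => |x| ^ r) (Ioi 0) :=
  (antitoneOn_rpow_Ioi_of_exponent_nonpos hr).congr fun x (hx : 0 < x) => by rw [abs_of_pos hx]

lemma lintegral_exp_neg_mul_abs_sub_rpow_le (hs₀ : 0 < s) (hs₁ : s ≤ 1) (y : ℝ) :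
    ∫⁻ x in Ioi (0 : ℝ), ENNReal.ofReal (exp (-x)) * ENNReal.ofReal (|x - y| ^ (s - 1)) ≤
      2 * ENNReal.ofReal (Gamma s) := by
  have exp_anti : Antitone fun x : ℝ => exp (-x) := exp_monotone.comp_antitone monotone_id.neg
  rw [← lintegral_exp_neg_mul_abs_rpow hs₀]
  exact lintegral_mul_comp_sub_le_two_mul (w := fun x => ENNReal.ofReal (exp (-x)))
    (g := fun x => ENNReal.ofReal (|x| ^ (s - 1)))
    ((ENNReal.ofReal_mono.comp_antitone exp_anti).antitoneOn _)
    (ENNReal.ofReal_mono.comp_antitoneOn (antitoneOn_abs_rpow_Ioi (sub_nonpos.2 hs₁)))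
    (fun x => by simp only [abs_neg]) y

theorem exponential_strategy_bounded_expected_payoff_general (hs₀ : 0 < s) (hs₁ : s ≤ 1) (y : ℝ) :
    ∫ x in Ici (0 : ℝ), exp (-x) * |x - y| ^ (s - 1) ≤ 2 * Gamma s := by
  have integrand_nonneg (x : ℝ) : 0 ≤ exp (-x) * |x - y| ^ (s - 1) := by positivity
  rw [integral_Ici_eq_integral_Ioi, integral_eq_lintegral_of_nonneg_ae
    (.of_forall integrand_nonneg) (by fun_prop)]
  refine ENNReal.toReal_le_of_le_ofReal (by positivity) ?_
  simpa only [ENNReal.ofReal_mul (exp_pos _).le, ENNReal.ofReal_mul zero_le_two,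
    ENNReal.ofReal_ofNat] using lintegral_exp_neg_mul_abs_sub_rpow_le hs₀ hs₁ y

end Gamma

-- At `z = 0` both sides are `0`, because `0 ^ r = 0` for real `r ≠ 0`.
lemma invSqrtAbs_eq_abs_rpow (z : ℝ) : invSqrtAbs z = |z| ^ (1 / 2 - 1 : ℝ) := by
  have exponent_eq : (1 / 2 - 1 : ℝ) = -(1 / 2) := by norm_num
  rcases eq_or_ne z 0 with rfl | hz
  · rw [invSqrtAbs, if_pos rfl, abs_zero, Real.zero_rpow (by norm_num)]
  · rw [invSqrtAbs, if_neg hz, exponent_eq, Real.rpow_neg (abs_nonneg z), Real.sqrt_eq_rpow,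
      one_div]

theorem exponential_strategy_bounded_expected_payoff (y : ℝ) :
    ∫ x in Set.Ici (0 : ℝ), Real.exp (-x) * invSqrtAbs (x - y) ≤ 2 * Real.sqrt Real.pi := by
  simpa only [invSqrtAbs_eq_abs_rpow, Real.Gamma_one_half_eq] using
    exponential_strategy_bounded_expected_payoff_general one_half_pos one_half_lt_one.le y
end

section
/- Define the payoff f : ℝ × ℝ → [0,∞] by f(x,y) = 1/√|x−y| for x ≠ y and f(x,y) = 0 for x = y. Then for every probability mass function p on ℝ (a countably supported probability distribution, i.e., a PMF), the supremum over y ∈ ℝ of the expected payoff ∑'_{x∈ℝ} p(x)·f(x,y) (a sum in the extended nonnegative reals) equals +∞. That is, every mixed strategy supported on a countable set of deterministic strategies has worst-case expected payoff +∞ in this game. -/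
/-! Some `a` carries positive weight, and the payoff against `a` tends to `∞` as `y → a` with
`y ≠ a`. The term of `a` alone therefore makes the expected payoff tend to `∞` along
`y → a`, `y ≠ a`. -/

open scoped BigOperators

open scoped ENNReal

noncomputable def guessPayoff (x y : ℝ) : ℝ≥0∞ :=
  if x = y then 0 else (ENNReal.ofReal (Real.sqrt |x - y|))⁻¹

open Filter Topology

theorem tendsto_guessPayoff_nhdsNE (a : ℝ) : Tendsto (guessPayoff a) (𝓝[≠] a) (𝓝 ⊤) := by
  have hcont : Continuous fun y => (ENNReal.ofReal √|a - y|)⁻¹ :=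
    (ENNReal.continuous_ofReal.comp (by fun_prop)).inv
  have hlim : Tendsto (fun y => (ENNReal.ofReal √|a - y|)⁻¹) (𝓝[≠] a) (𝓝 ⊤) :=
    (hcont.tendsto' a ⊤ (by simp)).mono_left nhdsWithin_le_nhds
  refine hlim.congr' ?_
  filter_upwards [self_mem_nhdsWithin] with y hy
  exact (if_neg (Ne.symm hy)).symm

theorem tendsto_tsum_mul_nhds_top {α β : Type*} {w : α → ℝ≥0∞} {f : α → β → ℝ≥0∞}
    {l : Filter β} {a : α} (ha : w a ≠ 0) (hf : Tendsto (f a) l (𝓝 ⊤)) :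
    Tendsto (fun y => ∑' x, w x * f x y) l (𝓝 ⊤) := by
  have hterm : Tendsto (fun y => w a * f a y) l (𝓝 ⊤) := by
    simpa only [ENNReal.mul_top ha] using
      ENNReal.Tendsto.const_mul (a := w a) hf (.inl ENNReal.top_ne_zero)
  exact tendsto_nhds_top_mono' hterm fun y => ENNReal.le_tsum (f := fun x => w x * f x y) a

theorem countable_mixed_strategy_unbounded_general {w : ℝ → ℝ≥0∞} (hw : w ≠ 0) :
    (⨆ y : ℝ, ∑' x : ℝ, w x * guessPayoff x y) = ⊤ := by
  obtain ⟨a, ha⟩ := Function.ne_iff.mp hw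
  have hlim : Tendsto (fun y => ∑' x, w x * guessPayoff x y) (𝓝[≠] a) (𝓝 ⊤) :=
    tendsto_tsum_mul_nhds_top ha (tendsto_guessPayoff_nhdsNE a)
  exact top_le_iff.mp (le_of_tendsto' hlim (le_iSup _))

theorem countable_mixed_strategy_unbounded (p : PMF ℝ) :
    (⨆ y : ℝ, ∑' x : ℝ, p x * guessPayoff x y) = ⊤ :=
  countable_mixed_strategy_unbounded_general (Function.support_nonempty_iff.mp p.support_nonempty)
end
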